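/- Let 0 ≤ α < ω₁, let X = [0,1] × ∏_{t∈(0,1]} X_t where X_t = ℕ with the discrete topology for every t ∈ (0,1], for i ∈ {1,2} let F_i = {y = (y_t)_{t∈(0,1]} ∈ ℕ^{(0,1]} : for every n ∈ ℕ with n ≠ i, the set {t ∈ (0,1] : y_t = n} has at most one element}, let A₁ ⊆ [0,1] be a set of the functionally additive class α in [0,1] which is not of the functionally multiplicative class α in [0,1], and let A₂ = [0,1]∖A₁. Then the set E = (A₁ × F₁) ∪ (A₂ × F₂) is not α-embedded in X. -/

import Mathlib

/-!
Since `(0,1]` is uncountable, no `y` takes every value at most once, so `F₁` and `F₂` are disjoint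
closed sets. Hence `B = A₁ × F₁` is clopen in `E`, and belongs to every class of the subspace `E`
(`funClass_of_isClopen`).

Suppose `C` has multiplicative class `α` in `X` and `C ∩ E = B`. A continuous real function on `X`
depends on countably many coordinates of the second factor (`exists_countable_dependsOn_prod`),
and this passes to every functionally measurable set (`FunClass.exists_countable_support`); let `S`
be such a countable set of coordinates for `C`. Take `y₁ ∈ F₁` and `y₂ ∈ F₂` which are equal and
injective on `S`, with `yᵢ` constantly `i` off `S`. Then `(x, y₁) ∈ C ↔ (x, y₂) ∈ C` for all `x`,
which forces `A₁ = {x | (x, y₁) ∈ C}`. This is a continuous preimage of `C`, so it has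
multiplicative class `α`, a contradiction.
-/

open Set Topology

/-- A topological space is pseudo-ℵ₁-compact if every locally finite family of
(pairwise distinct) nonempty open subsets is at most countable. -/
def PseudoAleph1Compact (Z : Type*) [TopologicalSpace Z] : Prop :=
  ∀ 𝒰 : Set (Set Z), (∀ U ∈ 𝒰, IsOpen U) → (∀ U ∈ 𝒰, U.Nonempty) →
    LocallyFinite (fun U : 𝒰 => (U : Set Z)) → 𝒰.Countable

/-- `A` is functionally closed in `Z` if it is the zero set of a continuous real function. -/
def FunctionallyClosed {Z : Type*} [TopologicalSpace Z] (A : Set Z) : Prop :=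
  ∃ f : Z → ℝ, Continuous f ∧ A = f ⁻¹' {0}

/-- `A` is functionally open in `Z` if its complement is functionally closed. -/
def FunctionallyOpen {Z : Type*} [TopologicalSpace Z] (A : Set Z) : Prop :=
  FunctionallyClosed Aᶜ

/-- `FunClass Z true α A` : `A` is of the functionally additive class `α` in `Z`;
`FunClass Z false α A` : `A` is of the functionally multiplicative class `α` in `Z`. -/
inductive FunClass (Z : Type*) [TopologicalSpace Z] : Bool → Ordinal.{0} → Set Z → Prop
  | open_ (A : Set Z) (h : FunctionallyOpen A) : FunClass Z true 0 A
  | closed_ (A : Set Z) (h : FunctionallyClosed A) : FunClass Z false 0 A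
  | union (α : Ordinal.{0}) (A : ℕ → Set Z) (β : ℕ → Ordinal.{0}) (hα : α ≠ 0)
      (hβ : ∀ n, β n < α) (h : ∀ n, FunClass Z false (β n) (A n)) :
      FunClass Z true α (⋃ n, A n)
  | inter (α : Ordinal.{0}) (A : ℕ → Set Z) (β : ℕ → Ordinal.{0}) (hα : α ≠ 0)
      (hβ : ∀ n, β n < α) (h : ∀ n, FunClass Z true (β n) (A n)) :
      FunClass Z false α (⋂ n, A n)

/-- `A` is α-embedded in `Z` if every subset of `A` of functionally multiplicative class `α`
in the subspace `A` is the trace on `A` of a set of functionally multiplicative class `α` in `Z`. -/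
def IsAlphaEmbedded {Z : Type*} [TopologicalSpace Z] (α : Ordinal.{0}) (A : Set Z) : Prop :=
  ∀ B : Set Z, B ⊆ A → FunClass ↥A false α (Subtype.val ⁻¹' B) →
    ∃ C : Set Z, FunClass Z false α C ∧ C ∩ A = B

/-- `Z` is α-universal if every subset of `Z` is α-embedded in `Z`. -/
def AlphaUniversal (Z : Type*) [TopologicalSpace Z] (α : Ordinal.{0}) : Prop :=
  ∀ A : Set Z, IsAlphaEmbedded α A

/-- The projection of the product `∀ t, X t` onto the coordinates in `S`. -/
def proj {T : Type*} {X : T → Type*} (S : Set T) (x : ∀ t, X t) : ∀ t : S, X t.1 :=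
  fun t => x t.1

/-- A functionally measurable (Baire) set: a member of some functionally additive or
multiplicative class `α` with `α < ω₁`. -/
def FunctionallyMeasurable {Z : Type*} [TopologicalSpace Z] (A : Set Z) : Prop :=
  ∃ (b : Bool) (β : Ordinal.{0}), β < (Cardinal.aleph 1).ord ∧ FunClass Z b β A

/-- `Y` has a regular `Gδ`-diagonal. -/
def RegularGDeltaDiagonal (Y : Type*) [TopologicalSpace Y] : Prop :=
  ∃ G : ℕ → Set (Y × Y), (∀ n, IsOpen (G n)) ∧
    {p : Y × Y | p.1 = p.2} = ⋂ n, G n ∧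
    {p : Y × Y | p.1 = p.2} = ⋂ n, closure (G n)

/-- The natural numbers `{1, 2, 3, ...}` with the discrete topology
(as a subspace of the discrete space `ℕ`). -/
abbrev PosNat : Type := {n : ℕ // 0 < n}

/-- The product `Y = ℕ^{(0,1]}` where `ℕ = {1,2,...}` is discrete. -/
abbrev Yprod : Type := ↥(Set.Ioc (0 : ℝ) 1) → PosNat

/-- Stone's set `F i = {y ∈ Y : |{t : y t = n}| ≤ 1 for every n ≠ i}`. -/
def Fset (i : PosNat) : Set Yprod :=
  {y | ∀ n : PosNat, n ≠ i → {t : ↥(Set.Ioc (0 : ℝ) 1) | y t = n}.Subsingleton}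

/-- The product `X = [0,1] × ℕ^{(0,1]}`. -/
abbrev Xprod : Type := ↥(Set.Icc (0 : ℝ) 1) × Yprod

/-! ### Functions depending on countably many coordinates -/

/-- Closing off: a countable set can be made closed under an operation assigning a countable set
to every finite set. -/
lemma exists_countable_closed {ι : Type*} (G : Finset ι → Set ι) (hG : ∀ T, (G T).Countable) :
    ∃ S : Set ι, S.Countable ∧ ∀ T : Finset ι, (T : Set ι) ⊆ S → G T ⊆ S := by
  let step : Set ι → Set ι := fun S => S ∪ ⋃ T ∈ {T : Finset ι | (T : Set ι) ⊆ S}, G T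
  let s : ℕ → Set ι := fun n => step^[n] ∅
  have hs : ∀ n, s (n + 1) = step (s n) := fun n => Function.iterate_succ_apply' _ _ _
  have hcount : ∀ n, (s n).Countable := by
    intro n
    induction n with
    | zero => simp [s]
    | succ n ih =>
      rw [hs]
      refine ih.union (Set.Countable.biUnion ?_ fun T _ => hG T)
      have hfin := (Set.countable_ofPred_finite_subset ih).preimage (Finset.coe_injective (α := ι))
      refine hfin.mono fun T hT => ?_
      exact ⟨T.finite_toSet, hT⟩
  have hmono : Monotone s := monotone_nat_of_le_succ fun n => by
    rw [hs]; exact Set.subset_union_left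
  refine ⟨⋃ n, s n, Set.countable_iUnion hcount, fun T hT => ?_⟩
  obtain ⟨n, hn⟩ := hmono.directed_le.exists_mem_subset_of_finset_subset_biUnion
    (s := T) hT
  refine subset_trans ?_ (Set.subset_iUnion s (n + 1))
  rw [hs]
  exact subset_trans (Set.subset_biUnion_of_mem (u := G)
    (show T ∈ {T : Finset ι | (T : Set ι) ⊆ s n} from hn)) Set.subset_union_right

/-- A continuous real function on a product is, up to `ε` near a given point, determined by
finitely many coordinates. -/
lemma exists_finset_close {ι N : Type*} [TopologicalSpace N] {g : (ι → N) → ℝ}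
    (hg : Continuous g) (y : ι → N) {ε : ℝ} (hε : 0 < ε) :
    ∃ T : Finset ι, ∀ z : ι → N, (∀ t ∈ T, z t = y t) → dist (g z) (g y) < ε := by
  have h : g ⁻¹' Metric.ball (g y) ε ∈ 𝓝 y :=
    hg.continuousAt.preimage_mem_nhds (Metric.ball_mem_nhds _ hε)
  rw [nhds_pi, Filter.mem_pi'] at h
  obtain ⟨T, u, hu, hsub⟩ := h
  refine ⟨T, fun z hz => hsub fun t ht => ?_⟩
  rw [hz t ht]
  exact mem_of_mem_nhds (hu t)

/-- The set `S` is chosen closed under passing from a finitely supported point `d` to the finite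
sets of coordinates controlling `g` near `d`. Any `y` is then compared with a finitely supported
`d` over `S`, and points that agree on `S` can be compared with the same `d`. -/
lemma exists_countable_dependsOn {ι N : Type*} [TopologicalSpace N] [Countable N] [Inhabited N]
    {g : (ι → N) → ℝ} (hg : Continuous g) :
    ∃ S : Set ι, S.Countable ∧ DependsOn g S := by
  classical
  choose T hT using fun (y : ι → N) (k : ℕ) =>
    exists_finset_close hg y (Nat.one_div_pos_of_nat (α := ℝ) (n := k))
  let ext : (R : Finset ι) → (R → N) → ι → N :=
    fun R v t => if h : t ∈ R then v ⟨t, h⟩ else default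
  obtain ⟨S, hS, hclosed⟩ := exists_countable_closed
    (fun R : Finset ι => ⋃ (v : R → N) (k : ℕ), (T (ext R v) k : Set ι))
    (fun R => Set.countable_iUnion fun v => Set.countable_iUnion fun k =>
      (T (ext R v) k).countable_toSet)
  refine ⟨S, hS, fun y y' hyy => ?_⟩
  refine eq_of_forall_dist_le fun ε hε => ?_
  obtain ⟨k, hk⟩ := exists_nat_one_div_lt (show (0 : ℝ) < ε / 4 by positivity)
  -- `d` copies `y` on the relevant coordinates inside `S`.
  let R : Finset ι := (T y k ∪ T y' k).filter (· ∈ S)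
  let d : ι → N := ext R fun t => y t
  have hRS : (R : Set ι) ⊆ S := fun t ht => (Finset.mem_filter.1 ht).2
  have hdS : ∀ t ∈ T d k, t ∈ S := fun t ht =>
    hclosed R hRS (Set.mem_iUnion.2 ⟨fun t => y t, Set.mem_iUnion.2 ⟨k, ht⟩⟩)
  have key : ∀ w : ι → N, (∀ t ∈ S, w t = y t) → T w k ⊆ T y k ∪ T y' k →
      dist (g w) (g d) < ε / 2 := by
    intro w hw hsub
    -- `z` agrees with both `d` and `w` on the coordinates that control `g` there.
    let z : ι → N := fun t => if t ∈ T d k then d t else w t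
    have h1 : dist (g z) (g d) < 1 / ((k : ℝ) + 1) :=
      hT d k z fun t ht => by simp [z, ht]
    have h2 : dist (g z) (g w) < 1 / ((k : ℝ) + 1) := by
      refine hT w k z fun t ht => ?_
      by_cases h : t ∈ T d k
      · have htS := hdS t h
        have htR : t ∈ R := Finset.mem_filter.2 ⟨hsub ht, htS⟩
        simp [z, d, ext, htR, hw t htS]
      · simp [z, h]
    have := dist_triangle_left (g w) (g d) (g z)
    linarith
  have h1 := key y (fun _ _ => rfl) Finset.subset_union_left
  have h2 := key y' (fun t ht => (hyy t ht).symm) Finset.subset_union_right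
  have := dist_triangle_right (g y) (g y') (g d)
  linarith

lemma exists_countable_dependsOn_prod {K ι N : Type*} [TopologicalSpace K]
    [TopologicalSpace.SeparableSpace K]
    [TopologicalSpace N] [Countable N] [Inhabited N] {f : K × (ι → N) → ℝ} (hf : Continuous f) :
    ∃ S : Set ι, S.Countable ∧ ∀ x, DependsOn (fun y => f (x, y)) S := by
  obtain ⟨Q, hQ, hQd⟩ := TopologicalSpace.exists_countable_dense K
  choose S hS hdep using fun x : K =>
    exists_countable_dependsOn (hf.comp (Continuous.prodMk_right x))
  refine ⟨⋃ x ∈ Q, S x, hQ.biUnion fun x _ => hS x, fun x y y' h => ?_⟩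
  have heq : (fun x => f (x, y)) = fun x => f (x, y') := by
    refine Continuous.ext_on hQd (by fun_prop) (by fun_prop) fun q hq => ?_
    exact hdep q fun t ht => h t (Set.mem_biUnion hq ht)
  exact congrFun heq x

/-! ### Functional classes -/

lemma FunClass.exists_countable_support {K ι N : Type*} [TopologicalSpace K]
    [TopologicalSpace.SeparableSpace K]
    [TopologicalSpace N] [Countable N] [Inhabited N] {b : Bool} {β : Ordinal.{0}}
    {C : Set (K × (ι → N))} (h : FunClass (K × (ι → N)) b β C) :
    ∃ S : Set ι, S.Countable ∧ ∀ x, DependsOn (fun y => (x, y) ∈ C) S := by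
  induction h with
  | open_ A h =>
    obtain ⟨f, hf, hA⟩ := h
    obtain ⟨S, hS, hd⟩ := exists_countable_dependsOn_prod hf
    refine ⟨S, hS, fun x y y' hy => ?_⟩
    have := hd x hy
    rw [compl_eq_comm] at hA
    simp_all [← hA]
  | closed_ A h =>
    obtain ⟨f, hf, rfl⟩ := h
    obtain ⟨S, hS, hd⟩ := exists_countable_dependsOn_prod hf
    refine ⟨S, hS, fun x y y' hy => ?_⟩
    have := hd x hy
    simp_all
  | union α A β hα hβ h ih =>
    choose S hS hd using ih
    refine ⟨⋃ n, S n, Set.countable_iUnion hS, fun x y y' hy => ?_⟩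
    simp only [Set.mem_iUnion]
    exact congrArg _ (funext fun n => hd n x fun t ht => hy t (Set.mem_iUnion.2 ⟨n, ht⟩))
  | inter α A β hα hβ h ih =>
    choose S hS hd using ih
    refine ⟨⋃ n, S n, Set.countable_iUnion hS, fun x y y' hy => ?_⟩
    simp only [Set.mem_iInter]
    exact forall_congr fun n => hd n x fun t ht => hy t (Set.mem_iUnion.2 ⟨n, ht⟩)

lemma FunClass.preimage {Z W : Type*} [TopologicalSpace Z] [TopologicalSpace W] {φ : W → Z}
    (hφ : Continuous φ) {b : Bool} {β : Ordinal.{0}} {C : Set Z} (h : FunClass Z b β C) :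
    FunClass W b β (φ ⁻¹' C) := by
  induction h with
  | open_ A h =>
    obtain ⟨f, hf, hA⟩ := h
    exact .open_ _ ⟨f ∘ φ, hf.comp hφ, by rw [← Set.preimage_compl, hA]; rfl⟩
  | closed_ A h =>
    obtain ⟨f, hf, rfl⟩ := h
    exact .closed_ _ ⟨f ∘ φ, hf.comp hφ, rfl⟩
  | union α A β hα hβ h ih => rw [Set.preimage_iUnion]; exact .union α _ β hα hβ ih
  | inter α A β hα hβ h ih => rw [Set.preimage_iInter]; exact .inter α _ β hα hβ ih

lemma functionallyClosed_of_isClopen {Z : Type*} [TopologicalSpace Z] {A : Set Z}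
    (h : IsClopen A) : FunctionallyClosed A := by
  refine ⟨Aᶜ.indicator fun _ => 1, ?_, ?_⟩
  · exact continuous_const.indicator (by simp [h.compl.frontier_eq])
  · ext z
    by_cases hz : z ∈ A <;> simp [hz]

lemma funClass_of_isClopen {Z : Type*} [TopologicalSpace Z] {A : Set Z}
    (h : IsClopen A) (α : Ordinal.{0}) : FunClass Z false α A := by
  by_cases hα : α = 0
  · rw [hα]
    exact .closed_ _ (functionallyClosed_of_isClopen h)
  · rw [← Set.iInter_const (ι := ℕ) A]
    exact .inter α _ (fun _ => 0) hα (fun _ => pos_iff_ne_zero.2 hα)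
      fun _ => .open_ _ (functionallyClosed_of_isClopen h.compl)

/-! ### Stone's sets -/

instance : Inhabited PosNat := ⟨⟨1, one_pos⟩⟩

lemma isClosed_Fset (i : PosNat) : IsClosed (Fset i) := by
  have : Fset i = ⋂ (n : PosNat) (_ : n ≠ i) (t : Set.Ioc (0 : ℝ) 1) (s : Set.Ioc (0 : ℝ) 1)
      (_ : t ≠ s), {y : Yprod | (y t, y s) ∈ ({(n, n)}ᶜ : Set (PosNat × PosNat))} := by
    ext y
    simp only [Fset, Set.mem_ofPred_eq, Set.Subsingleton, Set.mem_iInter, Set.mem_compl_iff,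
      Set.mem_singleton_iff, Prod.mk.injEq]
    exact ⟨fun h n hn t s hts ht => hts (h n hn ht.1 ht.2),
      fun h n hn t ht s hs => by_contra fun hts => h n hn t s hts ⟨ht, hs⟩⟩
  rw [this]
  refine isClosed_iInter fun n => isClosed_iInter fun _ => isClosed_iInter fun t =>
    isClosed_iInter fun s => isClosed_iInter fun _ => ?_
  exact (isClosed_discrete ({(n, n)}ᶜ : Set (PosNat × PosNat))).preimage
    ((continuous_apply t).prodMk (continuous_apply s))

instance : Uncountable (Set.Ioc (0 : ℝ) 1) := by
  rw [← not_countable_iff, Set.countable_coe_iff]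
  intro h
  have := (Cardinal.le_aleph0_iff_set_countable).2 h
  rw [Cardinal.mk_Ioc_real one_pos] at this
  exact absurd this (not_le.2 Cardinal.aleph0_lt_continuum)

/-- A point of both sets would be an injection of `(0,1]` into `ℕ`. -/
lemma disjoint_Fset {i j : PosNat} (hij : i ≠ j) : Disjoint (Fset i) (Fset j) := by
  rw [Set.disjoint_left]
  intro y hi hj
  have hinj : Function.Injective y := by
    intro t s hts
    by_cases h : y s = i
    · exact hj (y s) (fun h' => hij (h.symm.trans h')) hts rfl
    · exact hi (y s) h hts rfl
  exact not_countable (α := Set.Ioc (0 : ℝ) 1) hinj.countable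

/-- The point `y i` is constantly `i` off `S`; on `S` it is an injection independent of `i`. -/
lemma exists_mem_Fset {S : Set (Set.Ioc (0 : ℝ) 1)} (hS : S.Countable) :
    ∃ y : PosNat → Yprod, (∀ i, y i ∈ Fset i) ∧ ∀ i j, ∀ t ∈ S, y i t = y j t := by
  classical
  obtain ⟨f, hf⟩ := Set.countable_iff_exists_injOn.1 hS
  refine ⟨fun i t => if t ∈ S then ⟨f t + 3, by omega⟩ else i, fun i n hn t ht s hs => ?_,
    fun i j t ht => by simp [ht]⟩
  simp only [Set.mem_ofPred_eq] at ht hs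
  split_ifs at ht hs with h1 h2
  · refine hf h1 h2 ?_
    have := congrArg Subtype.val (ht.trans hs.symm)
    simpa using this
  all_goals exact absurd (by assumption) hn.symm

/-- if `A₁ ⊆ [0,1]` is of the functionally additive class `α` but not of
the functionally multiplicative class `α` in `[0,1]`, and `A₂ = [0,1] ∖ A₁`, then
`E = (A₁ × F₁) ∪ (A₂ × F₂)` is not α-embedded in `X = [0,1] × ℕ^{(0,1]}`. -/
theorem statement16 (α : Ordinal.{0}) (hα : α < (Cardinal.aleph 1).ord)
    (A₁ : Set ↥(Set.Icc (0 : ℝ) 1))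
    (hadd : FunClass ↥(Set.Icc (0 : ℝ) 1) true α A₁)
    (hmul : ¬ FunClass ↥(Set.Icc (0 : ℝ) 1) false α A₁) :
    ¬ IsAlphaEmbedded α
      ({p : Xprod | p.1 ∈ A₁ ∧ p.2 ∈ Fset ⟨1, one_pos⟩} ∪
        {p : Xprod | p.1 ∈ A₁ᶜ ∧ p.2 ∈ Fset ⟨2, two_pos⟩}) := by
  intro hemb
  have h12 : (⟨1, one_pos⟩ : PosNat) ≠ ⟨2, two_pos⟩ := 
    fun h => absurd (congrArg Subtype.val h) (by norm_num)
  have hdisj := Set.disjoint_left.1 (disjoint_Fset h12)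
  obtain ⟨C, hC, hCE⟩ := hemb {p : Xprod | p.1 ∈ A₁ ∧ p.2 ∈ Fset ⟨1, one_pos⟩}
    Set.subset_union_left <| by
      refine funClass_of_isClopen ⟨?_, ?_⟩ α
      · convert (isClosed_Fset ⟨1, one_pos⟩).preimage
          (continuous_snd.comp continuous_subtype_val) using 1
        ext ⟨p, hp⟩
        rcases hp with ⟨h1, h2⟩ | ⟨h1, h2⟩
        · exact iff_of_true ⟨h1, h2⟩ h2
        · exact iff_of_false (fun h => h1 h.1) fun h => hdisj h h2
      · rw [← isClosed_compl_iff]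
        convert (isClosed_Fset ⟨2, two_pos⟩).preimage
          (continuous_snd.comp continuous_subtype_val) using 1
        ext ⟨p, hp⟩
        rcases hp with ⟨h1, h2⟩ | ⟨h1, h2⟩
        · exact iff_of_false (fun h => h ⟨h1, h2⟩) (hdisj h2)
        · exact iff_of_true (fun h => h1 h.1) h2
  obtain ⟨S, hS, hdep⟩ := hC.exists_countable_support
  obtain ⟨y, hyF, hyS⟩ := exists_mem_Fset hS
  refine hmul ?_
  convert hC.preimage (Continuous.prodMk_left (y ⟨1, one_pos⟩)) using 1
  ext x
  rw [Set.mem_preimage]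
  constructor
  · intro hx
    exact (hCE.ge ⟨hx, hyF _⟩).1
  · intro hx
    by_contra hxA
    have hx2 : (x, y ⟨2, two_pos⟩) ∈ C :=
      (iff_of_eq (hdep x (hyS ⟨1, one_pos⟩ ⟨2, two_pos⟩))).1 hx
    exact hxA (hCE.le ⟨hx2, Or.inr ⟨hxA, hyF _⟩⟩).1
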